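/- Assume T is trace-class, μ-a.e. point of X is a Lebesgue point of f, supp μ = X, and the uniform tail condition lim_{m→∞} sup_{x∈X} Σ_{j≥m} λⱼ⁺ (uⱼ⁺(x))² = 0 holds. Then Σⱼ λⱼ⁺ (uⱼ⁺(x) - uⱼ⁺(y))² ≥ d(x,y)² for ALL pairs (x,y) ∈ X × X (not merely almost everywhere); in particular M is injective, and if X is compact then M : X → ℝ^∞ (with the product topology) is a homeomorphism onto its image. -/

import Mathlib

/-!
Write `K` for the centered kernel. Since `k` vanishes on the diagonal,
`d(x,y)² = K(x,x) + K(y,y) - 2 K(x,y)` (`dist_sq_eq_mdsKT`), so the point is to expand `K` pointwise,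
including on the diagonal, where the `L²(μ ⊗ μ)` expansion `K = ∑ λᵢ uᵢ ⊗ uᵢ` says nothing.

Averaging the `L²` expansion over `B_r(x) × B_r(y)` gives a series in the means of the `uᵢ` over the two
balls. By AM-GM and Jensen its tail beyond `m` is at most half the sum of the means of
`f - ∑_{i<m} |λᵢ| uᵢ²` over the balls (`abs_integral_kernel_sub_le`). As `r → 0`, the kernel and those
`uᵢ` with `λᵢ ≠ 0` are continuous and `x`, `y` are Lebesgue points of `f`, hence
`|K(x,y) - ∑_{i<m} λᵢ uᵢ(x) uᵢ(y)| ≤ (t_m(x) + t_m(y)) / 2` with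
`t_m = f - ∑_{i<m} |λᵢ| uᵢ²` (`abs_kernel_sub_le_of_isLebPoint`). Almost everywhere the series for `f`
converges, so `t_m → 0`, and `d(x,y)²` is the limit of `∑_{i<n} λᵢ (uᵢ(x) - uᵢ(y))²`. Dropping the
negative eigenvalues and cutting the series at the `m` of the uniform tail condition gives
`d(x,y)² ≤ ∑_{j<m} λⱼ⁺ (uⱼ(x) - uⱼ(y))² + 4ε` for almost all `x`, `y`. This is a closed condition, and
full-measure sets are dense because `μ` has full support, so it holds everywhere; then `ε → 0`.
Injectivity is immediate, and a continuous injection from a compact space to a Hausdorff space is an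
embedding.
-/

open MeasureTheory Metric Filter Topology

noncomputable section

/-- The MDS kernel `k(x,y) = -(1/2) d(x,y)²`. -/
def mdsK {X : Type*} [MetricSpace X] (x y : X) : ℝ := -(1/2) * dist x y ^ 2

/-- The centered MDS kernel. -/
def mdsKT {X : Type*} [MetricSpace X] [MeasurableSpace X] (μ : Measure X) (x y : X) : ℝ :=
  mdsK x y - (∫ y', mdsK x y' ∂μ) - (∫ x', mdsK x' y ∂μ) + ∫ x', ∫ y', mdsK x' y' ∂μ ∂μ

/-- `x` is a Lebesgue point of `f`: all balls around `x` have positive measure and the averages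
of `f` over `B_r(x)` converge to `f(x)` as `r → 0⁺`. -/
def IsLebPoint {X : Type*} [MetricSpace X] [MeasurableSpace X]
    (μ : Measure X) (f : X → ℝ) (x : X) : Prop :=
  (∀ r > 0, 0 < μ (ball x r)) ∧
  Tendsto (fun r : ℝ => (μ (ball x r)).toReal⁻¹ * ∫ y in ball x r, f y ∂μ)
    (𝓝[>] 0) (𝓝 (f x))

/-! ### Averages over probability measures -/

/-- Jensen's inequality for the square. -/
lemma sq_integral_le_integral_sq {Y : Type*} [MeasurableSpace Y] {ν : Measure Y}
    [IsProbabilityMeasure ν] {g : Y → ℝ} (hg : MemLp g 2 ν) :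
    (∫ y, g y ∂ν) ^ 2 ≤ ∫ y, g y ^ 2 ∂ν := by
  have h1 : Integrable g ν := hg.integrable (by norm_num)
  have h2 : Integrable (fun y => g y ^ 2) ν := hg.integrable_sq
  set a := ∫ y, g y ∂ν with ha
  have h0 : 0 ≤ ∫ y, (g y - a) ^ 2 ∂ν := integral_nonneg fun y => sq_nonneg _
  have h3 : ∫ y, (g y - a) ^ 2 ∂ν = (∫ y, g y ^ 2 ∂ν) - 2 * a * (∫ y, g y ∂ν) + a ^ 2 := by
    have : ∀ y, (g y - a) ^ 2 = g y ^ 2 - 2 * a * g y + a ^ 2 := fun y => by ring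
    have h4 : Integrable (fun y => 2 * a * g y) ν := h1.const_mul _
    have h5 : Integrable (fun y => g y ^ 2 - 2 * a * g y) ν := h2.sub h4
    simp_rw [this]
    rw [integral_add h5 (integrable_const _), integral_sub h2 h4, integral_const_mul]
    simp
  rw [h3, ← ha] at h0
  nlinarith

/-- Averages of a function over probability measures shrinking to `p` tend to its value at a
continuity point `p`. -/
lemma tendsto_integral_of_shrinking {Y : Type*} [MetricSpace Y] [MeasurableSpace Y]
    {ν : ℝ → Measure Y} (hν : ∀ r > 0, IsProbabilityMeasure (ν r)) {p : Y}
    (hp : ∀ r > 0, ∀ᵐ y ∂(ν r), dist y p < r) {g : Y → ℝ}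
    (hg : ∀ r > 0, Integrable g (ν r)) (hc : ContinuousAt g p) :
    Tendsto (fun r => ∫ y, g y ∂(ν r)) (𝓝[>] 0) (𝓝 (g p)) := by
  rw [Metric.tendsto_nhdsWithin_nhds]
  intro ε hε
  obtain ⟨δ, hδ, h⟩ := Metric.continuousAt_iff.1 hc (ε / 2) (by linarith)
  refine ⟨δ, hδ, fun {r} hr hrδ => ?_⟩
  have hr : 0 < r := hr
  have hrδ : r < δ := by simpa [abs_of_pos hr] using hrδ
  have := hν r hr
  have h1 : ∫ y, g y ∂(ν r) - g p = ∫ y, (g y - g p) ∂(ν r) := by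
    rw [integral_sub (hg r hr) (integrable_const _)]; simp
  have h2 : ‖∫ y, (g y - g p) ∂(ν r)‖ ≤ (ε / 2) * (ν r).real Set.univ := by
    apply norm_integral_le_of_norm_le_const
    filter_upwards [hp r hr] with y hy
    have := h (hy.trans hrδ)
    rw [Real.dist_eq] at this
    exact this.le
  rw [Real.dist_eq, h1]
  rw [Real.norm_eq_abs] at h2
  simp at h2
  linarith

/-- Averaged truncation estimate. The remainder of the expansion of the mean of `K` is a tail
`∑_{i ≥ m} λᵢ aᵢ bᵢ` with `aᵢ`, `bᵢ` the means of `uᵢ`; by AM-GM and Jensen it is bounded by half the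
sum of the tails `∑_{i ≥ m} |λᵢ| ∫ uᵢ²`, hence by the means of `f` minus its partial sums. -/
lemma abs_integral_kernel_sub_le {X : Type*} [MeasurableSpace X] {ν₁ ν₂ : Measure X}
    [IsProbabilityMeasure ν₁] [IsProbabilityMeasure ν₂] {lam : ℕ → ℝ} {u : ℕ → X → ℝ}
    {f : X → ℝ} {K : X × X → ℝ}
    (hu₁ : ∀ i, MemLp (u i) 2 ν₁) (hu₂ : ∀ i, MemLp (u i) 2 ν₂)
    (hf₁ : Integrable f ν₁) (hf₂ : Integrable f ν₂)
    (hle₁ : ∀ᵐ x ∂ν₁, ∀ n, ∑ i ∈ Finset.range n, |lam i| * u i x ^ 2 ≤ f x)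
    (hle₂ : ∀ᵐ x ∂ν₂, ∀ n, ∑ i ∈ Finset.range n, |lam i| * u i x ^ 2 ≤ f x)
    (hK : Integrable K (ν₁.prod ν₂))
    (hlim : Tendsto (fun n => ∫ p, (K p - ∑ i ∈ Finset.range n, lam i * u i p.1 * u i p.2)
      ∂(ν₁.prod ν₂)) atTop (𝓝 0)) (m : ℕ) :
    |(∫ p, K p ∂(ν₁.prod ν₂)) -
        ∑ i ∈ Finset.range m, lam i * (∫ x, u i x ∂ν₁) * (∫ x, u i x ∂ν₂)| ≤
      ((∫ x, f x ∂ν₁) - ∑ i ∈ Finset.range m, |lam i| * ∫ x, u i x ^ 2 ∂ν₁) / 2 +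
      ((∫ x, f x ∂ν₂) - ∑ i ∈ Finset.range m, |lam i| * ∫ x, u i x ^ 2 ∂ν₂) / 2 := by
  have hint : ∀ i, Integrable (fun p : X × X => lam i * u i p.1 * u i p.2) (ν₁.prod ν₂) := by
    intro i
    simp_rw [mul_assoc]
    exact (((hu₁ i).integrable (by norm_num)).mul_prod
      ((hu₂ i).integrable (by norm_num))).const_mul _
  have hval : ∀ n, ∫ p, (K p - ∑ i ∈ Finset.range n, lam i * u i p.1 * u i p.2) ∂(ν₁.prod ν₂) =
      (∫ p, K p ∂(ν₁.prod ν₂)) -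
        ∑ i ∈ Finset.range n, lam i * (∫ x, u i x ∂ν₁) * (∫ x, u i x ∂ν₂) := by
    intro n
    rw [integral_sub hK (integrable_finsetSum _ fun i _ => hint i),
      integral_finsetSum _ fun i _ => hint i]
    congr 1
    refine Finset.sum_congr rfl fun i _ => ?_
    simp_rw [mul_assoc]
    rw [integral_const_mul, integral_prod_mul (u i) (u i)]
  simp_rw [hval] at hlim
  have hfsum : ∀ (ν : Measure X), (∀ i, MemLp (u i) 2 ν) → Integrable f ν →
      (∀ᵐ x ∂ν, ∀ n, ∑ i ∈ Finset.range n, |lam i| * u i x ^ 2 ≤ f x) → ∀ n,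
      ∑ i ∈ Finset.range n, |lam i| * ∫ x, u i x ^ 2 ∂ν ≤ ∫ x, f x ∂ν := by
    intro ν hu hf hle n
    have hi : ∀ i, Integrable (fun x => |lam i| * u i x ^ 2) ν := fun i =>
      (hu i).integrable_sq.const_mul _
    simp_rw [← integral_const_mul]
    rw [← integral_finsetSum _ fun i _ => hi i]
    refine integral_mono_ae (integrable_finsetSum _ fun i _ => hi i) hf ?_
    filter_upwards [hle] with x hx using hx n
  set I := ∫ p, K p ∂(ν₁.prod ν₂)
  set S : ℕ → ℝ := fun n => ∑ i ∈ Finset.range n, lam i * (∫ x, u i x ∂ν₁) * (∫ x, u i x ∂ν₂)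
    with hS
  have hlim' : Tendsto (fun n => |(I - S n) + (S n - S m)| - |I - S n|) atTop
      (𝓝 (|I - S m| - 0)) := by
    have := hlim.abs
    simp only [abs_zero] at this
    refine Tendsto.sub ?_ this
    refine tendsto_const_nhds.congr fun n => ?_
    congr 1; ring
  rw [sub_zero] at hlim'
  refine le_of_tendsto hlim' ?_
  filter_upwards [eventually_ge_atTop m] with n hn
  have h1 := abs_add_le (I - S n) (S n - S m)
  have h2 : S n - S m = ∑ i ∈ Finset.Ico m n, lam i * (∫ x, u i x ∂ν₁) * (∫ x, u i x ∂ν₂) := by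
    rw [hS, Finset.sum_Ico_eq_sub _ hn]
  have h3 : |S n - S m| ≤ ∑ i ∈ Finset.Ico m n,
      (|lam i| * (∫ x, u i x ^ 2 ∂ν₁) / 2 + |lam i| * (∫ x, u i x ^ 2 ∂ν₂) / 2) := by
    rw [h2]
    refine (Finset.abs_sum_le_sum_abs _ _).trans (Finset.sum_le_sum fun i _ => ?_)
    have ha := sq_integral_le_integral_sq (hu₁ i)
    have hb := sq_integral_le_integral_sq (hu₂ i)
    rw [abs_mul, abs_mul, mul_assoc]
    have hab : |∫ x, u i x ∂ν₁| * |∫ x, u i x ∂ν₂| ≤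
        (∫ x, u i x ^ 2 ∂ν₁) / 2 + (∫ x, u i x ^ 2 ∂ν₂) / 2 := by
      rw [← sq_abs] at ha hb
      nlinarith [sq_nonneg (|∫ x, u i x ∂ν₁| - |∫ x, u i x ∂ν₂|)]
    calc _ ≤ |lam i| * ((∫ x, u i x ^ 2 ∂ν₁) / 2 + (∫ x, u i x ^ 2 ∂ν₂) / 2) := by gcongr
      _ = _ := by ring
  rw [Finset.sum_add_distrib, ← Finset.sum_div, ← Finset.sum_div,
    Finset.sum_Ico_eq_sub _ hn, Finset.sum_Ico_eq_sub _ hn] at h3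
  have h4 := hfsum ν₁ hu₁ hf₁ hle₁ n
  have h5 := hfsum ν₂ hu₂ hf₂ hle₂ n
  linarith

/-! ### Regularity of the centered kernel and of eigenfunctions -/

/-- Continuity of a parametric integral whose integrand grows at most quadratically in the
parameter: near any point the bound is uniform, so dominated convergence applies. -/
lemma continuous_integral_of_bound {X : Type*} [MetricSpace X] [SecondCountableTopology X]
    [MeasurableSpace X] [BorelSpace X] {μ : Measure X} {F : X → X → ℝ} {w : X → ℝ} {z : X}
    {a b c : ℝ} (ha : 0 ≤ a)
    (hF : ∀ x, AEStronglyMeasurable (F x) μ) (hFc : ∀ y, Continuous fun x => F x y)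
    (hw : Integrable w μ) (hqw : Integrable (fun y => dist z y ^ 2 * w y) μ)
    (hb : ∀ x y, |F x y| ≤ (a * dist z x ^ 2 + b * dist z y ^ 2 + c) * |w y|) :
    Continuous fun x => ∫ y, F x y ∂μ := by
  rw [continuous_iff_continuousAt]
  intro x₀
  have hq : Continuous fun x : X => dist z x ^ 2 := by fun_prop
  have hev : ∀ᶠ x in 𝓝 x₀, dist z x ^ 2 < dist z x₀ ^ 2 + 1 :=
    hq.continuousAt.eventually_lt continuousAt_const (by linarith)
  refine continuousAt_of_dominated
    (bound := fun y => (a * (dist z x₀ ^ 2 + 1) + c) * |w y| + b * |dist z y ^ 2 * w y|)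
    (Eventually.of_forall hF) ?_ ?_ (Eventually.of_forall fun y => (hFc y).continuousAt)
  · filter_upwards [hev] with x hx
    refine Eventually.of_forall fun y => (hb x y).trans ?_
    rw [abs_mul, abs_of_nonneg (sq_nonneg (dist z y))]
    have : a * dist z x ^ 2 * |w y| ≤ a * (dist z x₀ ^ 2 + 1) * |w y| := by gcongr
    linarith
  · exact (hw.abs.const_mul _).add (hqw.abs.const_mul _)

lemma dist_sq_le_two_mul {X : Type*} [MetricSpace X] (z x y : X) :
    dist x y ^ 2 ≤ 2 * dist z x ^ 2 + 2 * dist z y ^ 2 := by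
  have h := dist_triangle_left x y z
  have h0 : 0 ≤ dist x y := dist_nonneg
  nlinarith [sq_nonneg (dist z x - dist z y)]

lemma mdsK_comm {X : Type*} [MetricSpace X] (x y : X) : mdsK x y = mdsK y x := by
  simp [mdsK, dist_comm]

lemma abs_mdsK_le {X : Type*} [MetricSpace X] (z x y : X) :
    |mdsK x y| ≤ dist z x ^ 2 + dist z y ^ 2 := by
  have := dist_sq_le_two_mul z x y
  have h : |mdsK x y| = 1 / 2 * dist x y ^ 2 := by
    rw [mdsK, abs_mul, abs_of_nonneg (sq_nonneg (dist x y))]; norm_num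
  rw [h]; linarith

lemma memLp_dist_sq {X : Type*} [MetricSpace X]
    [MeasurableSpace X] [BorelSpace X] {μ : Measure X} {z : X}
    (hz : Integrable (fun y => dist z y ^ 4) μ) :
    MemLp (fun y => dist z y ^ 2) 2 μ := by
  have hm : AEStronglyMeasurable (fun y => dist z y ^ 2) μ :=
    Continuous.aestronglyMeasurable (by fun_prop)
  rw [memLp_two_iff_integrable_sq hm]
  simpa [← pow_mul] using hz

lemma continuous_integral_mdsK {X : Type*} [MetricSpace X] [SecondCountableTopology X]
    [MeasurableSpace X] [BorelSpace X] {μ : Measure X} [IsProbabilityMeasure μ] {z : X}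
    (hz : Integrable (fun y => dist z y ^ 4) μ) :
    Continuous fun x => ∫ y, mdsK x y ∂μ := by
  have hq : Integrable (fun y => dist z y ^ 2) μ := (memLp_dist_sq hz).integrable (by norm_num)
  refine continuous_integral_of_bound (w := fun _ => 1) (z := z) (a := 1) (b := 1) (c := 0)
    zero_le_one (fun x => Continuous.aestronglyMeasurable ?_) (fun y => ?_)
    (integrable_const _) (by simpa using hq) fun x y => ?_
  · unfold mdsK; fun_prop
  · unfold mdsK; fun_prop
  · simpa using abs_mdsK_le z x y

lemma mdsKT_eq {X : Type*} [MetricSpace X]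
    [MeasurableSpace X] {μ : Measure X}
    (x y : X) : mdsKT μ x y = mdsK x y - (∫ y', mdsK x y' ∂μ) -
    (∫ y', mdsK y y' ∂μ) + ∫ x', ∫ y', mdsK x' y' ∂μ ∂μ := by
  simp [mdsKT, mdsK_comm _ y]

lemma continuous_mdsKT {X : Type*} [MetricSpace X] [SecondCountableTopology X]
    [MeasurableSpace X] [BorelSpace X] {μ : Measure X} [IsProbabilityMeasure μ] {z : X}
    (hz : Integrable (fun y => dist z y ^ 4) μ) :
    Continuous fun p : X × X => mdsKT μ p.1 p.2 := by
  have h := continuous_integral_mdsK hz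
  simp_rw [mdsKT_eq]
  have h1 : Continuous fun p : X × X => mdsK p.1 p.2 := by unfold mdsK; fun_prop
  exact ((h1.sub (h.comp continuous_fst)).sub (h.comp continuous_snd)).add continuous_const

lemma exists_abs_mdsKT_le {X : Type*} [MetricSpace X] [SecondCountableTopology X]
    [MeasurableSpace X] [BorelSpace X] {μ : Measure X} [IsProbabilityMeasure μ] {z : X}
    (hz : Integrable (fun y => dist z y ^ 4) μ) :
    ∃ C, ∀ x y, |mdsKT μ x y| ≤ 2 * dist z x ^ 2 + 2 * dist z y ^ 2 + C := by
  have hq : Integrable (fun y => dist z y ^ 2) μ := (memLp_dist_sq hz).integrable (by norm_num)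
  have hh : ∀ x, |∫ y, mdsK x y ∂μ| ≤ dist z x ^ 2 + ∫ y, dist z y ^ 2 ∂μ := by
    intro x
    rw [← Real.norm_eq_abs]
    calc ‖∫ y, mdsK x y ∂μ‖ ≤ ∫ y, (dist z x ^ 2 + dist z y ^ 2) ∂μ :=
          norm_integral_le_of_norm_le (g := fun y => dist z x ^ 2 + dist z y ^ 2)
            ((integrable_const _).add hq) (Eventually.of_forall fun y => abs_mdsK_le z x y)
      _ = _ := by rw [integral_add (integrable_const _) hq]; simp
  refine ⟨2 * (∫ y, dist z y ^ 2 ∂μ) + |∫ x', ∫ y', mdsK x' y' ∂μ ∂μ|, fun x y => ?_⟩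
  rw [mdsKT_eq]
  have h1 := abs_le.1 (hh x)
  have h2 := abs_le.1 (hh y)
  have h3 := abs_le.1 (abs_mdsK_le z x y)
  have h4 := abs_le.1 (le_refl |∫ x', ∫ y', mdsK x' y' ∂μ ∂μ|)
  rw [abs_le]
  constructor <;> linarith

/-- The fourth moment condition makes the centered kernel square integrable. -/
lemma memLp_mdsKT {X : Type*} [MetricSpace X] [SecondCountableTopology X]
    [MeasurableSpace X] [BorelSpace X] {μ : Measure X} [IsProbabilityMeasure μ] {z : X}
    (hz : Integrable (fun y => dist z y ^ 4) μ) :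
    MemLp (fun p : X × X => mdsKT μ p.1 p.2) 2 (μ.prod μ) := by
  obtain ⟨C, hC⟩ := exists_abs_mdsKT_le hz
  have hq := memLp_dist_sq hz
  have h1 := (hq.comp_measurePreserving (measurePreserving_fst (μ := μ) (ν := μ))).const_mul 2
  have h2 := (hq.comp_measurePreserving (measurePreserving_snd (μ := μ) (ν := μ))).const_mul 2
  refine ((h1.add h2).add (memLp_const C)).mono
    (continuous_mdsKT hz).aestronglyMeasurable (Eventually.of_forall fun p => ?_)
  exact (hC p.1 p.2).trans (le_abs_self _)

lemma continuous_of_eigen {X : Type*} [MetricSpace X] [SecondCountableTopology X]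
    [MeasurableSpace X] [BorelSpace X] {μ : Measure X} [IsProbabilityMeasure μ] {z : X}
    (hz : Integrable (fun y => dist z y ^ 4) μ) {l : ℝ} (hl : l ≠ 0)
    {v : X → ℝ} (hv : MemLp v 2 μ) (he : ∀ x, l * v x = ∫ y, mdsKT μ x y * v y ∂μ) :
    Continuous v := by
  obtain ⟨C, hC⟩ := exists_abs_mdsKT_le hz
  have hK := continuous_mdsKT hz
  have h : Continuous fun x => ∫ y, mdsKT μ x y * v y ∂μ := by
    refine continuous_integral_of_bound (w := v) (z := z) (a := 2) (b := 2) (c := C)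
      zero_le_two (fun x => ?_) (fun y => ?_) (hv.integrable (by norm_num))
      ((memLp_dist_sq hz).integrable_mul hv) fun x y => ?_
    · exact (hK.comp (Continuous.prodMk_right x)).aestronglyMeasurable.mul hv.1
    · exact (hK.comp (Continuous.prodMk_left y)).mul continuous_const
    · rw [abs_mul]; gcongr; exact hC x y
  have h2 : v = fun x => l⁻¹ * ∫ y, mdsKT μ x y * v y ∂μ := by
    funext x; rw [← he, inv_mul_cancel_left₀ hl]
  rw [h2]; exact continuous_const.mul h

/-- Centering cancels: the squared distance is the polarization of the centered kernel. -/
lemma dist_sq_eq_mdsKT {X : Type*} [MetricSpace X]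
    [MeasurableSpace X] {μ : Measure X}
    (x y : X) :
    dist x y ^ 2 = mdsKT μ x x + mdsKT μ y y - 2 * mdsKT μ x y := by
  simp only [mdsKT_eq]; simp [mdsK]; ring

/-! ### Expansion of the kernel at Lebesgue points -/

/-- Trace-class implies that the series defining `f` converges almost everywhere. -/
lemma ae_summable_of_orthonormal {X : Type*} [MeasurableSpace X] {μ : Measure X}
    {lam : ℕ → ℝ} {u : ℕ → X → ℝ} (hu : ∀ i, MemLp (u i) 2 μ)
    (hnorm : ∀ i, ∫ x, u i x ^ 2 ∂μ = 1) (htrace : Summable fun i => |lam i|) :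
    ∀ᵐ x ∂μ, Summable fun i => |lam i| * u i x ^ 2 := by
  have hi : ∀ i, Integrable (fun x => |lam i| * u i x ^ 2) μ := fun i =>
    (hu i).integrable_sq.const_mul _
  have h0 : ∀ i x, 0 ≤ |lam i| * u i x ^ 2 := fun i x => by positivity
  have hm : ∀ i, AEMeasurable (fun x => ENNReal.ofReal (|lam i| * u i x ^ 2)) μ := fun i =>
    (hi i).1.aemeasurable.ennreal_ofReal
  have hfin : ∫⁻ x, ∑' i, ENNReal.ofReal (|lam i| * u i x ^ 2) ∂μ ≠ ⊤ := by
    rw [lintegral_tsum hm]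
    have : ∀ i, ∫⁻ x, ENNReal.ofReal (|lam i| * u i x ^ 2) ∂μ = ENNReal.ofReal |lam i| := by
      intro i
      rw [← ofReal_integral_eq_lintegral_ofReal (hi i) (Eventually.of_forall (h0 i)),
        integral_const_mul, hnorm, mul_one]
    simp_rw [this]
    exact htrace.tsum_ofReal_ne_top
  filter_upwards [ae_lt_top' (AEMeasurable.tsum hm) hfin] with x hx
  have := ENNReal.summable_toReal hx.ne
  simpa only [ENNReal.toReal_ofReal (h0 _ x)] using this

lemma memLp_cond {X : Type*} [MeasurableSpace X] {μ : Measure X} {A : Set X}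
    (hA : μ A ≠ 0) {g : X → ℝ} {p : ENNReal} (hg : MemLp g p μ) :
    MemLp g p (ProbabilityTheory.cond μ A) :=
  (hg.restrict A).smul_measure (ENNReal.inv_ne_top.2 hA)

/-- Convergence to `0` in `L²(μ ⊗ μ)` forces the averages over a fixed rectangle `A × B` to tend to
`0`: Jensen, plus the fact that the normalized measure on `A × B` is dominated by a multiple of
`μ ⊗ μ`. -/
lemma tendsto_integral_prod_cond {X : Type*} [MeasurableSpace X] {μ : Measure X}
    [IsProbabilityMeasure μ] {A B : Set X} (hA : μ A ≠ 0) (hB : μ B ≠ 0)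
    {g : ℕ → X × X → ℝ} (hg : ∀ n, MemLp (g n) 2 (μ.prod μ))
    (h : Tendsto (fun n => ∫ p, g n p ^ 2 ∂(μ.prod μ)) atTop (𝓝 0)) :
    Tendsto (fun n => ∫ p, g n p ∂((ProbabilityTheory.cond μ A).prod (ProbabilityTheory.cond μ B)))
      atTop (𝓝 0) := by
  have := ProbabilityTheory.cond_isProbabilityMeasure hA
  have := ProbabilityTheory.cond_isProbabilityMeasure hB
  have hprod : (ProbabilityTheory.cond μ A).prod (ProbabilityTheory.cond μ B) =
      ((μ A)⁻¹ * (μ B)⁻¹) • (μ.prod μ).restrict (A ×ˢ B) := by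
    simp only [ProbabilityTheory.cond]
    rw [Measure.prod_smul_left, Measure.prod_smul_right, Measure.prod_restrict, smul_smul]
  have hc : (μ A)⁻¹ * (μ B)⁻¹ ≠ ⊤ :=
    ENNReal.mul_ne_top (ENNReal.inv_ne_top.2 hA) (ENNReal.inv_ne_top.2 hB)
  have hbound : ∀ n, (∫ p, g n p ∂((ProbabilityTheory.cond μ A).prod
      (ProbabilityTheory.cond μ B))) ^ 2 ≤
      ((μ A)⁻¹ * (μ B)⁻¹).toReal * ∫ p, g n p ^ 2 ∂(μ.prod μ) := by
    intro n
    have hm : MemLp (g n) 2 ((ProbabilityTheory.cond μ A).prod (ProbabilityTheory.cond μ B)) := by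
      rw [hprod]; exact ((hg n).restrict _).smul_measure hc
    refine (sq_integral_le_integral_sq hm).trans ?_
    rw [hprod, integral_smul_measure, smul_eq_mul]
    exact mul_le_mul_of_nonneg_left (setIntegral_le_integral (hg n).integrable_sq
      (Eventually.of_forall fun p => sq_nonneg _)) ENNReal.toReal_nonneg
  have h2 : Tendsto (fun n => (∫ p, g n p ∂((ProbabilityTheory.cond μ A).prod
      (ProbabilityTheory.cond μ B))) ^ 2) atTop (𝓝 0) :=
    squeeze_zero (fun n => sq_nonneg _) hbound (by simpa using h.const_mul _)
  have h3 := h2.sqrt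
  simp only [Real.sqrt_zero, Real.sqrt_sq_eq_abs] at h3
  exact (tendsto_zero_iff_abs_tendsto_zero _).2 h3

/-- Pointwise expansion of the kernel at Lebesgue points of `f`, diagonal included: let the radius
tend to `0` in `abs_integral_kernel_sub_le`, applied to the normalized measures on
`B_r(x)` and `B_r(y)`. The Lebesgue point property is what makes the right-hand side converge, since
`f` itself need not be continuous. -/
lemma abs_kernel_sub_le_of_isLebPoint {X : Type*} [MetricSpace X] [SecondCountableTopology X]
    [MeasurableSpace X] [BorelSpace X] {μ : Measure X} [IsProbabilityMeasure μ]
    {lam : ℕ → ℝ} {u : ℕ → X → ℝ} {f : X → ℝ} {K : X × X → ℝ}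
    (hu : ∀ i, MemLp (u i) 2 μ) (huc : ∀ i, lam i ≠ 0 → Continuous (u i))
    (hf : Integrable f μ)
    (hle : ∀ᵐ x ∂μ, ∀ n, ∑ i ∈ Finset.range n, |lam i| * u i x ^ 2 ≤ f x)
    (hK : MemLp K 2 (μ.prod μ)) (hKc : Continuous K)
    (hbasis : Tendsto (fun n => ∫ p, (K p - ∑ i ∈ Finset.range n, lam i * u i p.1 * u i p.2) ^ 2
      ∂(μ.prod μ)) atTop (𝓝 0))
    {x y : X} (hx : IsLebPoint μ f x) (hy : IsLebPoint μ f y) (m : ℕ) :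
    |K (x, y) - ∑ i ∈ Finset.range m, lam i * u i x * u i y| ≤
      (f x - ∑ i ∈ Finset.range m, |lam i| * u i x ^ 2) / 2 +
      (f y - ∑ i ∈ Finset.range m, |lam i| * u i y ^ 2) / 2 := by
  let ν : X → ℝ → Measure X := fun a r => ProbabilityTheory.cond μ (ball a r)
  have hprob : ∀ {a}, IsLebPoint μ f a → ∀ r > 0, IsProbabilityMeasure (ν a r) := fun ha r hr =>
    ProbabilityTheory.cond_isProbabilityMeasure (ha.1 r hr).ne'
  have hnear : ∀ a r, ∀ᵐ b ∂(ν a r), dist b a < r := fun a r =>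
    ProbabilityTheory.ae_cond_mem measurableSet_ball
  have hmem : ∀ {a}, IsLebPoint μ f a → ∀ r > 0, ∀ {g : X → ℝ} {p : ENNReal}, MemLp g p μ →
      MemLp g p (ν a r) := fun ha r hr _ _ hg => memLp_cond (ha.1 r hr).ne' hg
  -- Limits of the averages of `f`, of `u i` and of `u i ^ 2` over shrinking balls.
  have hflim : ∀ {a}, IsLebPoint μ f a →
      Tendsto (fun r => ∫ b, f b ∂(ν a r)) (𝓝[>] 0) (𝓝 (f a)) := by
    intro a ha
    refine ha.2.congr fun r => ?_
    simp only [ν, ProbabilityTheory.cond]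
    rw [integral_smul_measure, ENNReal.toReal_inv, smul_eq_mul]
  have hulim : ∀ {a}, IsLebPoint μ f a → ∀ i, lam i ≠ 0 →
      Tendsto (fun r => ∫ b, u i b ∂(ν a r)) (𝓝[>] 0) (𝓝 (u i a)) := fun ha i hi =>
    tendsto_integral_of_shrinking (hprob ha) (fun r _ => hnear _ r)
      (fun r hr => have := hprob ha r hr
        (hmem ha r hr (hu i)).integrable (by norm_num)) (huc i hi).continuousAt
  have hslim : ∀ {a}, IsLebPoint μ f a → Tendsto (fun r => ((∫ b, f b ∂(ν a r)) -
      ∑ i ∈ Finset.range m, |lam i| * ∫ b, u i b ^ 2 ∂(ν a r)) / 2) (𝓝[>] 0)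
      (𝓝 ((f a - ∑ i ∈ Finset.range m, |lam i| * u i a ^ 2) / 2)) := by
    intro a ha
    refine ((hflim ha).sub (tendsto_finsetSum _ fun i _ => ?_)).div_const 2
    by_cases hi : lam i = 0
    · simp [hi]
    · exact (tendsto_integral_of_shrinking (g := fun b => u i b ^ 2) (hprob ha)
        (fun r _ => hnear _ r) (fun r hr => (hmem ha r hr (hu i)).integrable_sq)
        ((huc i hi).pow 2).continuousAt).const_mul _
  have hKint : ∀ r > 0, Integrable K ((ν x r).prod (ν y r)) := by
    intro r hr
    simp only [ν, ProbabilityTheory.cond]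
    rw [Measure.prod_smul_left, Measure.prod_smul_right, Measure.prod_restrict, smul_smul]
    exact (hK.integrable (by norm_num)).restrict.smul_measure
      (ENNReal.mul_ne_top (ENNReal.inv_ne_top.2 (hx.1 r hr).ne')
        (ENNReal.inv_ne_top.2 (hy.1 r hr).ne'))
  have hKlim : Tendsto (fun r => ∫ p, K p ∂((ν x r).prod (ν y r))) (𝓝[>] 0) (𝓝 (K (x, y))) := by
    refine tendsto_integral_of_shrinking (fun r hr => ?_) (fun r hr => ?_) hKint hKc.continuousAt
    · have := hprob hx r hr
      have := hprob hy r hr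
      infer_instance
    · have := hprob hx r hr
      have := hprob hy r hr
      have h1 := Measure.quasiMeasurePreserving_fst (μ := ν x r) (ν := ν y r) |>.ae (hnear x r)
      have h2 := Measure.quasiMeasurePreserving_snd (μ := ν x r) (ν := ν y r) |>.ae (hnear y r)
      filter_upwards [h1, h2] with p hp1 hp2
      rw [Prod.dist_eq]
      exact max_lt hp1 hp2
  have hLlim : Tendsto (fun r => |(∫ p, K p ∂((ν x r).prod (ν y r))) -
      ∑ i ∈ Finset.range m, lam i * (∫ b, u i b ∂(ν x r)) * (∫ b, u i b ∂(ν y r))|) (𝓝[>] 0)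
      (𝓝 |K (x, y) - ∑ i ∈ Finset.range m, lam i * u i x * u i y|) := by
    refine (hKlim.sub (tendsto_finsetSum _ fun i _ => ?_)).abs
    by_cases hi : lam i = 0
    · simp [hi]
    · exact ((hulim hx i hi).const_mul _).mul (hulim hy i hi)
  refine le_of_tendsto_of_tendsto hLlim ((hslim hx).add (hslim hy)) ?_
  filter_upwards [self_mem_nhdsWithin] with r hr
  have hr : 0 < r := hr
  have := hprob hx r hr
  have := hprob hy r hr
  have hac : ∀ a, ∀ᵐ b ∂(ν a r), ∀ n, ∑ i ∈ Finset.range n, |lam i| * u i b ^ 2 ≤ f b := fun a =>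
    ProbabilityTheory.cond_absolutelyContinuous.ae_le hle
  have hfi : ∀ {a}, IsLebPoint μ f a → Integrable f (ν a r) := fun ha =>
    memLp_one_iff_integrable.1 (hmem ha r hr (memLp_one_iff_integrable.2 hf))
  refine abs_integral_kernel_sub_le (fun i => hmem hx r hr (hu i)) (fun i => hmem hy r hr (hu i))
    (hfi hx) (hfi hy) (hac x) (hac y) (hKint r hr) ?_ m
  refine tendsto_integral_prod_cond (hx.1 r hr).ne' (hy.1 r hr).ne' (fun n => ?_) hbasis
  refine hK.sub (memLp_finsetSum _ fun i _ => ?_)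
  simp_rw [mul_assoc]
  refine MemLp.const_mul ?_ _
  have hsm : AEStronglyMeasurable (fun p : X × X => u i p.1 * u i p.2) (μ.prod μ) :=
    (hu i).1.comp_fst.mul (hu i).1.comp_snd
  rw [memLp_two_iff_integrable_sq hsm]
  simp_rw [mul_pow]
  exact (hu i).integrable_sq.mul_prod (hu i).integrable_sq

lemma sum_range_le_of_tail_le {X : Type*} [MetricSpace X] {lam : ℕ → ℝ} {u : ℕ → X → ℝ} {ε : ℝ} {m : ℕ}
    (h : ∀ x : X, ∀ n : ℕ, (∑ j ∈ Finset.Ico m n, max (lam j) 0 * (u j x) ^ 2) ≤ ε) {n : ℕ}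
    (hn : m ≤ n) (x y : X) :
    ∑ j ∈ Finset.range n, max (lam j) 0 * (u j x - u j y) ^ 2 ≤
      ∑ j ∈ Finset.range m, max (lam j) 0 * (u j x - u j y) ^ 2 + 4 * ε := by
  rw [← Finset.sum_range_add_sum_Ico _ hn]
  have : ∑ j ∈ Finset.Ico m n, max (lam j) 0 * (u j x - u j y) ^ 2 ≤
      ∑ j ∈ Finset.Ico m n, (2 * (max (lam j) 0 * u j x ^ 2) + 2 * (max (lam j) 0 * u j y ^ 2)) := by
    refine Finset.sum_le_sum fun j _ => ?_
    have h0 : 0 ≤ max (lam j) 0 := le_max_right _ _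
    nlinarith [mul_nonneg h0 (sq_nonneg (u j x + u j y))]
  rw [Finset.sum_add_distrib, ← Finset.mul_sum, ← Finset.mul_sum] at this
  have h1 := h x n
  have h2 := h y n
  linarith

/-- Remark 4.5: under trace-class and a.e. Lebesgue point assumptions, if `μ` has full
support and the uniform tail condition `lim_m sup_x Σ_{j≥m} λⱼ⁺ uⱼ⁺(x)² = 0` holds, then
`Σⱼ λⱼ⁺ (uⱼ⁺(x) - uⱼ⁺(y))² ≥ d(x,y)²` for ALL `x, y`; in particular the MDS map `M` is
injective, and if `X` is compact then `M : X → ℝ^∞` (product topology) is a homeomorphism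
onto its image. -/
theorem mds_map_expands_everywhere
    {X : Type*} [MetricSpace X] [CompleteSpace X] [SecondCountableTopology X]
    [MeasurableSpace X] [BorelSpace X]
    (μ : Measure X) [IsProbabilityMeasure μ]
    (hmom : ∃ z : X, Integrable (fun y => dist z y ^ 4) μ)
    (lam : ℕ → ℝ) (u : ℕ → X → ℝ)
    (hmeas : ∀ i, Measurable (u i))
    (heig : ∀ i, lam i ≠ 0 → ∀ x, lam i * u i x = ∫ y, mdsKT μ x y * u i y ∂μ)
    (horth : ∀ i j, (∫ x, u i x * u j x ∂μ) = if i = j then 1 else 0)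
    (htrace : Summable fun i => |lam i|)
    (hbasis : Tendsto
      (fun n => ∫ p, (mdsKT μ p.1 p.2 - ∑ i ∈ Finset.range n, lam i * u i p.1 * u i p.2) ^ 2
        ∂(μ.prod μ)) atTop (𝓝 0))
    (f : X → ℝ) (hf : f = fun x => ∑' i, |lam i| * (u i x) ^ 2)
    (hfint : Integrable f μ)
    (hleb : ∀ᵐ x ∂μ, IsLebPoint μ f x)
    (hsupp : ∀ (x : X), ∀ r > (0:ℝ), 0 < μ (ball x r))
    (htail : ∀ ε > (0:ℝ), ∃ m : ℕ, ∀ x : X, ∀ n : ℕ,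
      (∑ j ∈ Finset.Ico m n, max (lam j) 0 * (u j x) ^ 2) ≤ ε) :
    (∀ x y : X, dist x y ^ 2 ≤ ∑' j, max (lam j) 0 * (u j x - u j y) ^ 2) ∧
    Function.Injective (fun (x : X) => (fun j => Real.sqrt (max (lam j) 0) * u j x : ℕ → ℝ)) ∧
    (CompactSpace X →
      IsEmbedding (fun (x : X) => (fun j => Real.sqrt (max (lam j) 0) * u j x : ℕ → ℝ))) := by
  obtain ⟨z, hz⟩ := hmom
  have hsq : ∀ i, ∫ x, u i x ^ 2 ∂μ = 1 := fun i => by simpa [sq] using horth i i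
  -- A non-integrable `u i ^ 2` would have Bochner integral `0`, not `1`.
  have hu : ∀ i, MemLp (u i) 2 μ := fun i =>
    (memLp_two_iff_integrable_sq (hmeas i).aestronglyMeasurable).2 <|
      Integrable.of_integral_ne_zero (by rw [hsq i]; exact one_ne_zero)
  have huc : ∀ i, lam i ≠ 0 → Continuous (u i) := fun i hi =>
    continuous_of_eigen hz hi (hu i) (heig i hi)
  have hsum := ae_summable_of_orthonormal hu hsq htrace
  have hle : ∀ᵐ x ∂μ, ∀ n, ∑ i ∈ Finset.range n, |lam i| * u i x ^ 2 ≤ f x := by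
    filter_upwards [hsum] with x hx n
    rw [hf]
    exact hx.sum_le_tsum _ fun i _ => by positivity
  have : μ.IsOpenPosMeasure := by
    refine ⟨fun U hU ⟨x, hx⟩ h0 => ?_⟩
    obtain ⟨r, hr, hsub⟩ := Metric.isOpen_iff.1 hU x hx
    exact (hsupp x r hr).ne' (measure_mono_null hsub h0)
  have hdense : Dense {x | (Summable fun i => |lam i| * u i x ^ 2) ∧ IsLebPoint μ f x} :=
    Measure.dense_of_ae (hsum.and hleb)
  have hmain : ∀ ε > (0 : ℝ), ∀ m : ℕ,
      (∀ x : X, ∀ n : ℕ, (∑ j ∈ Finset.Ico m n, max (lam j) 0 * (u j x) ^ 2) ≤ ε) → ∀ p : X × X,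
      dist p.1 p.2 ^ 2 ≤
        ∑ j ∈ Finset.range m, max (lam j) 0 * (u j p.1 - u j p.2) ^ 2 + 4 * ε := by
    intro ε hε m hm p
    -- Both sides are continuous, so it suffices to treat the dense set of good points.
    have hclosed : IsClosed {p : X × X | dist p.1 p.2 ^ 2 ≤
        ∑ j ∈ Finset.range m, max (lam j) 0 * (u j p.1 - u j p.2) ^ 2 + 4 * ε} := by
      refine isClosed_le (by fun_prop) ((continuous_finsetSum _ fun j _ => ?_).add
        continuous_const)
      by_cases hj : lam j = 0
      · simpa [hj] using continuous_const
      · have := huc j hj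
        fun_prop
    refine hclosed.closure_subset_iff.2 ?_ ((hdense.prod hdense) p)
    rintro ⟨x, y⟩ ⟨⟨hxs, hx⟩, ⟨hys, hy⟩⟩
    have htl : ∀ {a}, (Summable fun i => |lam i| * u i a ^ 2) →
        Tendsto (fun n => f a - ∑ i ∈ Finset.range n, |lam i| * u i a ^ 2) atTop (𝓝 0) := by
      intro a ha
      have := ha.hasSum.tendsto_sum_nat.const_sub (f a)
      simpa [hf] using this
    have hlim := (((htl hxs).const_mul 2).add ((htl hys).const_mul 2)).const_add
      (∑ j ∈ Finset.range m, max (lam j) 0 * (u j x - u j y) ^ 2 + 4 * ε)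
    simp only [mul_zero, add_zero] at hlim
    refine ge_of_tendsto hlim ?_
    filter_upwards [eventually_ge_atTop m] with n hn
    -- Apply the expansion of the kernel at `(x, x)`, `(y, y)` and `(x, y)`.
    have hk : ∀ {a b}, IsLebPoint μ f a → IsLebPoint μ f b → _ := fun {a b} ha hb =>
      abs_le.1 (abs_kernel_sub_le_of_isLebPoint hu huc hfint hle (memLp_mdsKT hz)
        (continuous_mdsKT hz) hbasis ha hb n)
    have hxx := (hk hx hx).2
    have hyy := (hk hy hy).2
    have hxy := (hk hx hy).1
    have hd := dist_sq_eq_mdsKT (μ := μ) x y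
    have hexp : ∑ i ∈ Finset.range n, lam i * (u i x - u i y) ^ 2 =
        ∑ i ∈ Finset.range n, lam i * u i x * u i x + ∑ i ∈ Finset.range n, lam i * u i y * u i y -
          2 * ∑ i ∈ Finset.range n, lam i * u i x * u i y := by
      rw [Finset.mul_sum, ← Finset.sum_add_distrib, ← Finset.sum_sub_distrib]
      exact Finset.sum_congr rfl fun i _ => by ring
    have hpos : ∑ i ∈ Finset.range n, lam i * (u i x - u i y) ^ 2 ≤
        ∑ i ∈ Finset.range n, max (lam i) 0 * (u i x - u i y) ^ 2 :=
      Finset.sum_le_sum fun i _ => by gcongr; exact le_max_left _ _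
    have htail' := sum_range_le_of_tail_le hm hn x y
    dsimp only at *
    linarith
  have h0 : ∀ x y j, 0 ≤ max (lam j) 0 * (u j x - u j y) ^ 2 := fun x y j =>
    mul_nonneg (le_max_right _ _) (sq_nonneg _)
  have hsummable : ∀ x y, Summable fun j => max (lam j) 0 * (u j x - u j y) ^ 2 := by
    intro x y
    obtain ⟨m, hm⟩ := htail 1 one_pos
    refine summable_of_sum_range_le
      (c := ∑ j ∈ Finset.range m, max (lam j) 0 * (u j x - u j y) ^ 2 + 4 * 1) (h0 x y) fun n => ?_
    exact (Finset.sum_le_sum_of_subset_of_nonneg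
      (Finset.range_mono (le_max_right m n)) fun i _ _ => h0 x y i).trans
        (sum_range_le_of_tail_le hm (le_max_left m n) x y)
  have hexpand : ∀ x y : X, dist x y ^ 2 ≤ ∑' j, max (lam j) 0 * (u j x - u j y) ^ 2 := by
    intro x y
    refine le_of_forall_pos_le_add fun ε hε => ?_
    obtain ⟨m, hm⟩ := htail (ε / 4) (by positivity)
    have h1 := hmain _ (by positivity) m hm (x, y)
    have h2 := (hsummable x y).sum_le_tsum (Finset.range m) fun i _ => h0 x y i
    dsimp only at h1
    linarith
  have hinj : Function.Injective
      (fun (x : X) => (fun j => Real.sqrt (max (lam j) 0) * u j x : ℕ → ℝ)) := by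
    intro x y hxy
    have hz : ∀ j, max (lam j) 0 * (u j x - u j y) ^ 2 = 0 := by
      intro j
      have hj : Real.sqrt (max (lam j) 0) * u j x = Real.sqrt (max (lam j) 0) * u j y :=
        congrFun hxy j
      rw [← Real.sq_sqrt (le_max_right (lam j) 0), ← mul_pow, mul_sub, hj, sub_self]
      simp
    have h := hexpand x y
    simp_rw [hz, tsum_zero] at h
    exact dist_eq_zero.1 (pow_eq_zero_iff two_ne_zero |>.1 (le_antisymm h (sq_nonneg _)))
  refine ⟨hexpand, hinj, fun hX => ?_⟩
  -- A continuous injection of a compact space into a Hausdorff space is an embedding.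
  refine (Continuous.isClosedEmbedding (continuous_pi fun j => ?_) hinj).isEmbedding
  by_cases hj : lam j = 0
  · simpa [hj] using continuous_const
  · exact continuous_const.mul (huc j hj)
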